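/- With the above construction, if A ⊆ ℕ contains a non-trivial arithmetic progression of length n (i.e. a, a+d, …, a+(n−1)d ∈ A with d ≥ 1), then the compact set B = ⋂_k B_k ⊆ [0,1] contains a non-trivial arithmetic progression of length n, i.e. there exist x ∈ [0,1] and δ ≠ 0 with x, x+δ, …, x+(n−1)δ ∈ B. -/

import Mathlib

open MeasureTheory Filter Set
open scoped BigOperators ENNReal

/-- Number of elements of `A ⊆ ℕ` below `n`, i.e. `|A ∩ [0, n)|`. -/
noncomputable def cardBelow (A : Set ℕ) (n : ℕ) : ℕ := Nat.card ↥(A ∩ Set.Iio n)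

/-- `A ⊆ ℕ` has upper fractional density `α`: `limsup_N |A ∩ [0,N)| / N^b` is `∞` for
every `b < α` and `0` for every `b > α`. -/
def HasUpperFracDensity (A : Set ℕ) (α : ℝ) : Prop :=
  (∀ b : ℝ, b < α →
    Filter.atTop.limsup (fun n : ℕ => (cardBelow A n : ℝ≥0∞) / (n : ℝ≥0∞) ^ b) = ⊤) ∧
  (∀ b : ℝ, α < b →
    Filter.atTop.limsup (fun n : ℕ => (cardBelow A n : ℝ≥0∞) / (n : ℝ≥0∞) ^ b) = 0)

/-- `η_k = 1 − 1/(k+1)²`. -/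
noncomputable def etaseq (k : ℕ) : ℝ := 1 - 1 / ((k : ℝ) + 1) ^ 2

/-- The common length `L_k = (η_1 ⋯ η_k)/(N_1 ⋯ N_k)` of the intervals making up the
`k`-th stage `B_k` of the construction (`L_0 = 1`). -/
noncomputable def Lfun (N : ℕ → ℕ) : ℕ → ℝ
  | 0 => 1
  | k + 1 => etaseq (k + 1) * Lfun N k / (N (k + 1) : ℝ)

/-- The set of left endpoints of the intervals making up the `k`-th stage `B_k`:
at stage `k+1` each interval of `B_k` is divided into `N_{k+1}` equal subintervals and,
for each `a ∈ A ∩ [0, N_{k+1})`, the left-hand portion of the `a`-th subinterval is kept. -/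
def leftEnds (A : Set ℕ) (N : ℕ → ℕ) : ℕ → Set ℝ
  | 0 => {0}
  | k + 1 => {y : ℝ | ∃ x ∈ leftEnds A N k, ∃ a : ℕ, a ∈ A ∧ a < N (k + 1) ∧
      y = x + (a : ℝ) * Lfun N k / (N (k + 1) : ℝ)}

/-- The `k`-th stage `B_k` of the construction: the union of the closed intervals of
length `L_k` with left endpoints in `leftEnds A N k`. -/
def Bset (A : Set ℕ) (N : ℕ → ℕ) (k : ℕ) : Set ℝ :=
  ⋃ x ∈ leftEnds A N k, Set.Icc x (x + Lfun N k)

/-- The limit set `B = ⋂_k B_k` of the construction. -/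
def Blim (A : Set ℕ) (N : ℕ → ℕ) : Set ℝ := ⋂ k, Bset A N k


lemma eta_pos (k : ℕ) : 0 < etaseq (k+1) ∧ etaseq (k+1) ≤ 1 := by
  unfold etaseq
  have h : (1:ℝ) < (((k+1:ℕ):ℝ)+1)^2 := by
    have : (0:ℝ) ≤ k := Nat.cast_nonneg k
    push_cast; nlinarith
  have h2 : 1 / (((k+1:ℕ):ℝ)+1)^2 < 1 := by
    rw [div_lt_one (by linarith)]; exact h
  have h3 : 0 ≤ 1 / (((k+1:ℕ):ℝ)+1)^2 := by positivity
  constructor <;> linarith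

lemma L_pos (N : ℕ → ℕ) (h : ∀ k, 0 < N (k+1)) (k : ℕ) : 0 < Lfun N k := by
  induction k with
  | zero => simp [Lfun]
  | succ k ih =>
    have := (eta_pos k).1
    have h' : (0:ℝ) < N (k+1) := by exact_mod_cast h k
    simp only [Lfun]; positivity

noncomputable def psum (N : ℕ → ℕ) (e : ℕ → ℕ) (k : ℕ) : ℝ :=
  ∑ i ∈ Finset.range k, (e i : ℝ) * Lfun N i / (N (i+1) : ℝ)

lemma psum_mono (N : ℕ → ℕ) (h : ∀ k, 0 < N (k+1)) (e : ℕ → ℕ) : Monotone (psum N e) := by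
  refine monotone_nat_of_le_succ fun k => ?_
  have := L_pos N h k
  simp only [psum, Finset.sum_range_succ]
  have : 0 ≤ (e k : ℝ) * Lfun N k / (N (k+1) : ℝ) := by positivity
  linarith

lemma psum_anti (N : ℕ → ℕ) (h : ∀ k, 0 < N (k+1)) (e : ℕ → ℕ) (he : ∀ k, e k < N (k+1)) :
    Antitone (fun k => psum N e k + Lfun N k) := by
  refine antitone_nat_of_succ_le fun k => ?_
  have hL := L_pos N h k
  have h' : (0:ℝ) < N (k+1) := by exact_mod_cast h k
  have h1 : (e k : ℝ) + 1 ≤ N (k+1) := by exact_mod_cast he k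
  have h2 := (eta_pos k).2
  simp only [psum, Finset.sum_range_succ, Lfun]
  have : (e k : ℝ) * Lfun N k / (N (k+1) : ℝ) + etaseq (k+1) * Lfun N k / (N (k+1) : ℝ) ≤ Lfun N k := by
    rw [← add_div, div_le_iff₀ h']
    nlinarith
  linarith

lemma psum_mem (A : Set ℕ) (N : ℕ → ℕ) (e : ℕ → ℕ) (he : ∀ k, e k < N (k+1))
    (heA : ∀ k, e k ∈ A) (k : ℕ) : psum N e k ∈ leftEnds A N k := by
  induction k with
  | zero => simp [psum, leftEnds]
  | succ k ih => exact ⟨_, ih, e k, heA k, he k, by simp [psum, Finset.sum_range_succ]⟩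

lemma lim_mem (A : Set ℕ) (N : ℕ → ℕ) (h : ∀ k, 0 < N (k+1)) (e : ℕ → ℕ)
    (he : ∀ k, e k < N (k+1)) (heA : ∀ k, e k ∈ A) (p : ℝ)
    (hp : Tendsto (psum N e) atTop (nhds p)) : p ∈ Blim A N := by
  refine Set.mem_iInter.2 fun k => Set.mem_biUnion (psum_mem A N e he heA k) ⟨?_, ?_⟩
  · exact (psum_mono N h e).ge_of_tendsto hp k
  · refine le_of_tendsto hp ?_
    filter_upwards [eventually_ge_atTop k] with m hm
    have h1 := psum_anti N h e he hm
    have h2 := L_pos N h m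
    simp only at h1
    linarith

lemma lim_exists (N : ℕ → ℕ) (h : ∀ k, 0 < N (k+1)) (e : ℕ → ℕ)
    (he : ∀ k, e k < N (k+1)) : ∃ p, Tendsto (psum N e) atTop (nhds p) := by
  refine ⟨_, tendsto_atTop_ciSup (psum_mono N h e) ⟨psum N e 0 + Lfun N 0, ?_⟩⟩
  rintro _ ⟨m, rfl⟩
  have h1 := psum_anti N h e he (Nat.zero_le m)
  have h2 := L_pos N h m
  simp only at h1
  linarith

/-- Preservation of arithmetic progressions from `ℕ` to `[0,1]`: with the construction
above, if `A ⊆ ℕ` contains a non-trivial arithmetic progression of length `n`, then the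
compact set `B = ⋂_k B_k ⊆ [0,1]` contains a non-trivial arithmetic progression of
length `n`. -/
theorem statement7 (A : Set ℕ) (β : ℝ) (hβ0 : 0 < β) (hβ1 : β ≤ 1)
    (hdens : HasUpperFracDensity A β)
    (N : ℕ → ℕ) (hN : StrictMono N) (hNpos : 0 < N 1)
    (c C : ℝ) (hc : 0 < c)
    (hbound : ∀ i : ℕ, 1 ≤ i →
      c ≤ (cardBelow A (N i) : ℝ) / (N i : ℝ) ^ β ∧
      (cardBelow A (N i) : ℝ) / (N i : ℝ) ^ β ≤ C)
    (n : ℕ)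
    (hAP : ∃ a d : ℕ, 1 ≤ d ∧ ∀ j : ℕ, j < n → a + j * d ∈ A) :
    ∃ x δ : ℝ, x ∈ Set.Icc (0 : ℝ) 1 ∧ δ ≠ 0 ∧
      ∀ j : ℕ, j < n → x + (j : ℝ) * δ ∈ Blim A N := by
  obtain ⟨a, d, hd, hA⟩ := hAP
  rcases Nat.eq_zero_or_pos n with rfl | hn
  · exact ⟨0, 1, by simp, one_ne_zero, by simp⟩
  have hpos : ∀ k, 0 < N (k+1) := fun k =>
    lt_of_lt_of_le hNpos (hN.monotone (by omega))
  have hne : ∀ k, ∃ x, x ∈ A ∧ x < N (k+1) := by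
    intro k
    have h1 := (hbound (k+1) (by omega)).1
    have h2 : cardBelow A (N (k+1)) ≠ 0 := by
      intro h0
      rw [h0] at h1
      simp at h1
      linarith
    have h3 : Nonempty ↥(A ∩ Set.Iio (N (k+1))) := by
      by_contra h4
      rw [not_nonempty_iff] at h4
      exact h2 (by unfold cardBelow; exact Nat.card_of_isEmpty)
    obtain ⟨x, hx⟩ := h3
    exact ⟨x, hx.1, hx.2⟩
  choose e heA he using hne
  set K := a + n * d with hK
  have hKN : ∀ j, j < n → a + j * d < N (K+1) := by
    intro j hj
    have h1 : K + 1 ≤ N (K+1) := hN.le_apply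
    have h2 : j * d ≤ n * d := Nat.mul_le_mul_right d hj.le
    omega
  let f : ℕ → ℕ → ℕ := fun j => Function.update e K (a + j * d)
  have hf : ∀ j, j < n → ∀ k, f j k < N (k+1) := by
    intro j hj k
    by_cases hk : k = K
    · subst hk; simpa [f] using hKN j hj
    · simpa [f, hk] using he k
  have hfA : ∀ j, j < n → ∀ k, f j k ∈ A := by
    intro j hj k
    by_cases hk : k = K
    · subst hk; simpa [f] using hA j hj
    · simpa [f, hk] using heA k
  obtain ⟨p, hp⟩ := lim_exists N hpos (f 0) (hf 0 hn)
  have hpB := lim_mem A N hpos (f 0) (hf 0 hn) (hfA 0 hn) p hp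
  have hLK := L_pos N hpos K
  have hNK : (0:ℝ) < N (K+1) := by exact_mod_cast hpos K
  have hd' : (0:ℝ) < d := by exact_mod_cast hd
  refine ⟨p, d * Lfun N K / N (K+1), ?_, by positivity, ?_⟩
  · have := Set.mem_iInter.1 hpB 0
    simpa [Bset, leftEnds, Lfun] using this
  · intro j hj
    refine lim_mem A N hpos (f j) (hf j hj) (hfA j hj) _ ?_
    refine (hp.add_const _).congr' ?_
    filter_upwards [eventually_gt_atTop K] with m hm
    have hm' : K ∈ Finset.range m := Finset.mem_range.2 hm
    unfold psum
    rw [← Finset.add_sum_erase _ _ hm', ← Finset.add_sum_erase _ _ hm']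
    have : ∑ x ∈ (Finset.range m).erase K, (f 0 x : ℝ) * Lfun N x / (N (x+1) : ℝ)
        = ∑ x ∈ (Finset.range m).erase K, (f j x : ℝ) * Lfun N x / (N (x+1) : ℝ) := by
      refine Finset.sum_congr rfl fun x hx => ?_
      have hx' := (Finset.mem_erase.1 hx).1
      simp [f, hx']
    rw [this]
    have e0 : f 0 K = a := by simp [f]
    have e1 : f j K = a + j * d := by simp [f]
    rw [e0, e1]
    push_cast
    ring
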